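/- Let I be a fat points ideal in P^2 and M the irrelevant ideal. If α(I^{(2r)}) ≥ r·(reg(I) + 1), then I^{(2r)} ⊆ M^r · I^r. -/

import Mathlib

/-- The initial degree `α(I)`: the least degree of a nonzero element of `I`. -/
noncomputable def initialDegree {N : ℕ}
    (I : Ideal (MvPolynomial (Fin N) ℂ)) : ℕ :=
  sInf {d | ∃ f ∈ I, f ≠ 0 ∧ f.totalDegree = d}

/-- The Hilbert function of `R/I` in degree `d`, where `R = ℂ[x_0, x_1, x_2]`. -/
noncomputable def quotientHilbert {N : ℕ}
    (I : Ideal (MvPolynomial (Fin N) ℂ)) (d : ℕ) : ℕ :=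
  Module.finrank ℂ (MvPolynomial.homogeneousSubmodule (Fin N) ℂ d) -
    Module.finrank ℂ
      ((MvPolynomial.homogeneousSubmodule (Fin N) ℂ d ⊓
        Submodule.restrictScalars ℂ I : Submodule ℂ (MvPolynomial (Fin N) ℂ)))

/-- The Castelnuovo–Mumford regularity of a saturated homogeneous ideal with
zero-dimensional support (e.g. a fat points ideal): the least `t` such that
the Hilbert function of `R/I` is constant in all degrees `≥ t − 1`. -/
noncomputable def regCM {N : ℕ} (I : Ideal (MvPolynomial (Fin N) ℂ)) : ℕ :=
  sInf {t | ∀ d : ℕ, t ≤ d + 1 → quotientHilbert I d = quotientHilbert I (d + 1)}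

/-- The homogeneous ideal `𝔪_P` of a point `P ∈ ℙ²` with homogeneous
coordinates `p ≠ 0`: the ideal generated by all linear forms vanishing at `p`. -/
noncomputable def pointIdeal (p : Fin 3 → ℂ) : Ideal (MvPolynomial (Fin 3) ℂ) :=
  Ideal.span {f | f ∈ MvPolynomial.homogeneousSubmodule (Fin 3) ℂ 1 ∧
    MvPolynomial.eval p f = 0}

open MvPolynomial

namespace FatPoints

section Filtration

variable {σ k : Type*} [Field k]

lemma mem_pow_of_isHomogeneous {n : ℕ} {p : MvPolynomial σ k} (hp : p.IsHomogeneous n) :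
    p ∈ idealOfVars σ k ^ n := by
  rw [mem_pow_idealOfVars_iff']
  exact fun x hx => hp.coeff_eq_zero hx.ne

lemma eq_zero_of_isHomogeneous_of_mem_pow {n : ℕ} {p : MvPolynomial σ k}
    (hp : p.IsHomogeneous n) (h : p ∈ idealOfVars σ k ^ (n + 1)) : p = 0 := by
  ext x
  rw [coeff_zero]
  by_cases hx : x.degree = n
  · exact (mem_pow_idealOfVars_iff' _ _).1 h x (by omega)
  · exact hp.coeff_eq_zero hx

lemma sub_homogeneousComponent_mem {n : ℕ} {p : MvPolynomial σ k}
    (hp : p ∈ idealOfVars σ k ^ n) :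
    p - homogeneousComponent n p ∈ idealOfVars σ k ^ (n + 1) := by
  classical
  rw [mem_pow_idealOfVars_iff'] at hp ⊢
  intro x hx
  rw [coeff_sub, coeff_homogeneousComponent]
  split_ifs with h
  · simp
  · rw [hp x (by omega), sub_zero]

/-- Division by a nonzero linear form lowers the order at the origin by exactly one. -/
lemma mem_pow_of_linear_mul_mem {L : MvPolynomial σ k} (hL : L.IsHomogeneous 1) (hL0 : L ≠ 0)
    {n : ℕ} {u : MvPolynomial σ k} (h : L * u ∈ idealOfVars σ k ^ (n + 1)) :
    u ∈ idealOfVars σ k ^ n := by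
  induction n with
  | zero => simp
  | succ n ih =>
    have hu := ih (Ideal.pow_le_pow_right (by omega) h)
    have hr := sub_homogeneousComponent_mem hu
    have hLM : L ∈ idealOfVars σ k := by simpa using mem_pow_of_isHomogeneous hL
    have hz : L * homogeneousComponent n u = 0 := by
      refine eq_zero_of_isHomogeneous_of_mem_pow
        (hL.mul (homogeneousComponent_isHomogeneous n u)) ?_
      have : L * homogeneousComponent n u =
          L * u - L * (u - homogeneousComponent n u) := by ring
      rw [this]
      refine sub_mem (by convert h using 2; omega) ?_
      have := Ideal.mul_mem_mul hLM hr
      rw [← pow_succ'] at this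
      convert this using 2
      omega
    rcases mul_eq_zero.1 hz with h0 | h0
    · exact absurd h0 hL0
    · rwa [h0, sub_zero] at hr

/-- The ideal `K` is generated by forms of degree `n`. -/
def GeneratedInDegree (n : ℕ) (K : Ideal (MvPolynomial σ k)) : Prop :=
  ∃ G : Set (MvPolynomial σ k), (∀ g ∈ G, g.IsHomogeneous n) ∧ K = Ideal.span G

lemma GeneratedInDegree.mul {m n : ℕ} {K K' : Ideal (MvPolynomial σ k)}
    (h : GeneratedInDegree m K) (h' : GeneratedInDegree n K') :
    GeneratedInDegree (m + n) (K * K') := by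
  obtain ⟨G, hG, rfl⟩ := h
  obtain ⟨G', hG', rfl⟩ := h'
  refine ⟨_, ?_, Ideal.span_mul_span' G G'⟩
  rintro _ ⟨a, ha, b, hb, rfl⟩
  exact (hG a ha).mul (hG' b hb)

lemma generatedInDegree_top : GeneratedInDegree 0 (⊤ : Ideal (MvPolynomial σ k)) :=
  ⟨{1}, by simpa using isHomogeneous_one σ k, by simp⟩

lemma generatedInDegree_pow_idealOfVars (n : ℕ) :
    GeneratedInDegree n (idealOfVars σ k ^ n) := by
  refine ⟨_, ?_, pow_idealOfVars_eq_span n⟩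
  rintro _ ⟨x, hx, rfl⟩
  exact isHomogeneous_monomial _ hx

lemma GeneratedInDegree.le_pow {n : ℕ} {K : Ideal (MvPolynomial σ k)}
    (h : GeneratedInDegree n K) : K ≤ idealOfVars σ k ^ n := by
  obtain ⟨G, hG, rfl⟩ := h
  exact Ideal.span_le.2 fun g hg => mem_pow_of_isHomogeneous (hG g hg)

lemma GeneratedInDegree.mem_mul_of_mem_pow_succ {n : ℕ} {K : Ideal (MvPolynomial σ k)}
    (h : GeneratedInDegree n K) {f : MvPolynomial σ k} (hf : f ∈ K)
    (hf' : f ∈ idealOfVars σ k ^ (n + 1)) : f ∈ idealOfVars σ k * K := by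
  have hle : idealOfVars σ k * K ≤ idealOfVars σ k ^ (n + 1) := by
    rw [pow_succ']
    exact Ideal.mul_mono_right h.le_pow
  obtain ⟨G, hG, rfl⟩ := h
  have key : ∃ u : MvPolynomial σ k, u.IsHomogeneous n ∧
      f - u ∈ idealOfVars σ k * Ideal.span G := by
    clear hf'
    refine Submodule.span_induction (p := fun f _ => ∃ u : MvPolynomial σ k, u.IsHomogeneous n ∧
      f - u ∈ idealOfVars σ k * Ideal.span G) ?_ ?_ ?_ ?_ hf
    · exact fun g hg => ⟨g, hG g hg, by simp⟩
    · exact ⟨0, isHomogeneous_zero _ _ _, by simp⟩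
    · rintro a b - - ⟨u, hu, hau⟩ ⟨v, hv, hbv⟩
      refine ⟨u + v, hu.add hv, ?_⟩
      have := add_mem hau hbv
      convert this using 1
      ring
    · rintro c a ha ⟨u, hu, hau⟩
      refine ⟨C (coeff 0 c) * u, hu.C_mul _, ?_⟩
      have hc : c - C (coeff 0 c) ∈ idealOfVars σ k := by
        have := sub_homogeneousComponent_mem (n := 0) (p := c) (by simp)
        simpa using this
      have := add_mem (Ideal.mul_mem_mul hc ha)
        (Ideal.mul_mem_left _ (C (coeff 0 c)) hau)
      convert this using 1
      simp only [smul_eq_mul]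
      ring
  obtain ⟨u, hu, hfu⟩ := key
  have h0 : u = 0 := by
    refine eq_zero_of_isHomogeneous_of_mem_pow hu ?_
    have := sub_mem hf' (hle hfu)
    simpa using this
  simpa [h0] using hfu

lemma GeneratedInDegree.mem_pow_mul_of_mem_pow_add {n : ℕ} {K : Ideal (MvPolynomial σ k)}
    (h : GeneratedInDegree n K) {f : MvPolynomial σ k} (hf : f ∈ K) {j : ℕ}
    (hf' : f ∈ idealOfVars σ k ^ (j + n)) : f ∈ idealOfVars σ k ^ j * K := by
  induction j with
  | zero => simpa using hf
  | succ j ih =>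
    rw [pow_succ', mul_assoc]
    refine ((generatedInDegree_pow_idealOfVars j).mul h).mem_mul_of_mem_pow_succ
      (ih (Ideal.pow_le_pow_right (by omega) hf')) ?_
    convert hf' using 2
    omega

end Filtration

section Syzygies

/-- The syzygies of the monomials of degree `ρ` in two variables are generated by the obvious
linear ones, with control of the order of the coefficients. -/
lemma exists_linear_syzygy (ρ n : ℕ) (H : ℕ → MvPolynomial (Fin 3) ℂ)
    (hH : ∀ a, H a ∈ idealOfVars (Fin 3) ℂ ^ (n + 1))
    (h0 : ∑ a ∈ Finset.range (ρ + 1), H a * (X 0 ^ a * X 1 ^ (ρ - a)) = 0) :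
    ∃ c : ℕ → MvPolynomial (Fin 3) ℂ, (∀ a, c a ∈ idealOfVars (Fin 3) ℂ ^ n) ∧
      c 0 = 0 ∧ c (ρ + 1) = 0 ∧ ∀ a ≤ ρ, H a = X 1 * c a - X 0 * c (a + 1) := by
  induction ρ generalizing H with
  | zero =>
    refine ⟨0, by simp, rfl, rfl, fun a ha => ?_⟩
    obtain rfl : a = 0 := by omega
    simpa using h0
  | succ ρ ih =>
    rw [Finset.sum_range_succ'] at h0
    have hfac : ∑ a ∈ Finset.range (ρ + 1), H (a + 1) * (X 0 ^ (a + 1) * X 1 ^ (ρ + 1 - (a + 1))) =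
        X 0 * ∑ a ∈ Finset.range (ρ + 1), H (a + 1) * (X 0 ^ a * X 1 ^ (ρ - a)) := by
      rw [Finset.mul_sum]
      refine Finset.sum_congr rfl fun a _ => ?_
      rw [Nat.add_sub_add_right]
      ring
    rw [hfac] at h0
    have hp : Prime (X 0 : MvPolynomial (Fin 3) ℂ) := X_prime
    have hdvd : (X 0 : MvPolynomial (Fin 3) ℂ) ∣ H 0 := by
      have h1 : (X 0 : MvPolynomial (Fin 3) ℂ) ∣ H 0 * X 1 ^ (ρ + 1) := by
        refine ⟨-∑ a ∈ Finset.range (ρ + 1), H (a + 1) * (X 0 ^ a * X 1 ^ (ρ - a)), ?_⟩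
        simp only [pow_zero, one_mul, Nat.sub_zero] at h0
        linear_combination h0
      refine (hp.dvd_or_dvd h1).resolve_right fun h2 => ?_
      have := hp.dvd_of_dvd_pow h2
      rw [X_dvd_X] at this
      exact absurd this (by decide)
    obtain ⟨b, hb⟩ := hdvd
    have hbn : b ∈ idealOfVars (Fin 3) ℂ ^ n :=
      mem_pow_of_linear_mul_mem (isHomogeneous_X ℂ 0) (X_ne_zero 0) (hb ▸ hH 0)
    have hX1 : (X 1 : MvPolynomial (Fin 3) ℂ) ∈ idealOfVars (Fin 3) ℂ :=
      Ideal.subset_span ⟨1, rfl⟩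
    obtain ⟨c, hc, hc0, hcl, hcs⟩ := ih
      (fun a => if a = 0 then H 1 + X 1 * b else H (a + 1)) (by
        intro a
        split_ifs
        · refine add_mem (hH 1) ?_
          rw [pow_succ']
          exact Ideal.mul_mem_mul hX1 hbn
        · exact hH _) (by
        rw [Finset.sum_range_succ'] at h0 ⊢
        simp only [Nat.add_eq_zero_iff, one_ne_zero, and_false, if_false, if_true]
        refine (mul_eq_zero.1 ?_).resolve_left (X_ne_zero (R := ℂ) (0 : Fin 3))
        rw [hb] at h0
        simp only [pow_zero, Nat.sub_zero, one_mul, zero_add] at h0 ⊢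
        linear_combination h0)
    refine ⟨fun a => if a = 0 then 0 else if a = 1 then -b else c (a - 1), fun a => ?_, by simp,
      ?_, fun a ha => ?_⟩
    · dsimp only
      split_ifs
      · simp
      · exact neg_mem hbn
      · exact hc _
    · simpa using hcl
    · rcases a with _ | _ | a
      · simp [hb]
      · have := hcs 0 (by omega)
        simp only [if_true, hc0] at this
        simp
        linear_combination this
      · have := hcs (a + 1) (by omega)
        simp at this
        simpa using this

end Syzygies

/-- Containments modulo a fixed ideal multiply. -/
lemma mul_le_mul_sup {R : Type*} [CommRing R] {A A' B B' N : Ideal R} (hA : A ≤ A' ⊔ N)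
    (hB : B ≤ B' ⊔ N) : A * B ≤ A' * B' ⊔ N := by
  refine (Ideal.mul_mono hA hB).trans ?_
  rw [Ideal.sup_mul, Ideal.mul_sup]
  exact sup_le (sup_le_sup_left Ideal.mul_le_right _) (le_sup_of_le_right Ideal.mul_le_left)

section GenericLine

/-- A member of a one-parameter family of linear forms; all but finitely many members avoid a
given finite set of points. -/
noncomputable def genericLine (t : ℂ) : MvPolynomial (Fin 3) ℂ :=
  X 2 + C t * X 0 + C (t ^ 2) * X 1

lemma isHomogeneous_genericLine (t : ℂ) : (genericLine t).IsHomogeneous 1 :=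
  ((isHomogeneous_X ℂ 2).add (isHomogeneous_C_mul_X t 0)).add (isHomogeneous_C_mul_X (t ^ 2) 1)

lemma genericLine_ne_zero (t : ℂ) : genericLine t ≠ 0 := by
  intro h
  have := congrArg (eval ![0, 0, 1]) h
  simp [genericLine] at this

lemma genericLine_mem_idealOfVars (t : ℂ) : genericLine t ∈ idealOfVars (Fin 3) ℂ := by
  simpa using mem_pow_of_isHomogeneous (isHomogeneous_genericLine t)

/-- Elimination of the last variable modulo `genericLine t`. -/
noncomputable def lineProj (t : ℂ) : MvPolynomial (Fin 3) ℂ →ₐ[ℂ] MvPolynomial (Fin 3) ℂ :=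
  aeval ![X 0, X 1, -(C t * X 0 + C (t ^ 2) * X 1)]

lemma lineProj_genericLine (t : ℂ) : lineProj t (genericLine t) = 0 := by
  simp only [genericLine, map_add, map_mul, lineProj, aeval_X, algHom_C, algebraMap_eq]
  simp

lemma genericLine_dvd_sub_lineProj (t : ℂ) (u : MvPolynomial (Fin 3) ℂ) :
    genericLine t ∣ u - lineProj t u := by
  have h : (Ideal.Quotient.mkₐ ℂ (Ideal.span {genericLine t})).comp (lineProj t) =
      Ideal.Quotient.mkₐ ℂ (Ideal.span {genericLine t}) := by
    ext i
    simp only [AlgHom.comp_apply, Ideal.Quotient.mkₐ_eq_mk]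
    rw [Ideal.Quotient.eq, Ideal.mem_span_singleton]
    fin_cases i
    · simp [lineProj]
    · simp [lineProj]
    · refine ⟨-1, ?_⟩
      simp [lineProj, genericLine]
      ring
  have := AlgHom.congr_fun h u
  simp only [AlgHom.comp_apply, Ideal.Quotient.mkₐ_eq_mk] at this
  rw [← Ideal.mem_span_singleton, ← Ideal.Quotient.eq]
  exact this.symm

lemma lineProj_eq_zero_of_dvd {t : ℂ} {u : MvPolynomial (Fin 3) ℂ} (h : genericLine t ∣ u) :
    lineProj t u = 0 := by
  obtain ⟨v, rfl⟩ := h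
  rw [map_mul, lineProj_genericLine, zero_mul]

lemma lineProj_mem_pow (t : ℂ) {n : ℕ} {u : MvPolynomial (Fin 3) ℂ}
    (hu : u ∈ idealOfVars (Fin 3) ℂ ^ n) : lineProj t u ∈ idealOfVars (Fin 3) ℂ ^ n := by
  have hX : ∀ i : Fin 3, (X i : MvPolynomial (Fin 3) ℂ) ∈ idealOfVars (Fin 3) ℂ :=
    fun i => Ideal.subset_span ⟨i, rfl⟩
  have h : idealOfVars (Fin 3) ℂ ≤ (idealOfVars (Fin 3) ℂ).comap (lineProj t) := by
    refine Ideal.span_le.2 ?_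
    rintro _ ⟨i, rfl⟩
    simp only [SetLike.mem_coe, Ideal.mem_comap, lineProj, aeval_X]
    fin_cases i
    · exact hX 0
    · exact hX 1
    · exact neg_mem (add_mem (Ideal.mul_mem_left _ _ (hX 0)) (Ideal.mul_mem_left _ _ (hX 1)))
  exact (Ideal.pow_right_mono h n).trans (Ideal.le_comap_pow _ n) hu

/-- Modulo the line, every element of order `ρ` is a combination of the monomials of degree `ρ`
in the first two variables. -/
lemma exists_sum_monomials (t : ℂ) (ρ : ℕ) {v : MvPolynomial (Fin 3) ℂ}
    (hv : v ∈ idealOfVars (Fin 3) ℂ ^ ρ) :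
    ∃ b : ℕ → MvPolynomial (Fin 3) ℂ,
      genericLine t ∣ v - ∑ a ∈ Finset.range (ρ + 1), b a * (X 0 ^ a * X 1 ^ (ρ - a)) := by
  have hM : idealOfVars (Fin 3) ℂ ≤
      Ideal.span {X 0, X 1} ⊔ Ideal.span {genericLine t} := by
    refine Ideal.span_le.2 ?_
    have h0 : X 0 ∈ (Ideal.span {X 0, X 1} : Ideal (MvPolynomial (Fin 3) ℂ)) :=
      Ideal.subset_span (by simp)
    have h1 : X 1 ∈ (Ideal.span {X 0, X 1} : Ideal (MvPolynomial (Fin 3) ℂ)) :=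
      Ideal.subset_span (by simp)
    rintro _ ⟨i, rfl⟩
    fin_cases i
    · exact Ideal.mem_sup_left h0
    · exact Ideal.mem_sup_left h1
    · refine Submodule.mem_sup.2 ⟨-(C t * X 0 + C (t ^ 2) * X 1),
        neg_mem (add_mem (Ideal.mul_mem_left _ _ h0) (Ideal.mul_mem_left _ _ h1)),
        genericLine t, Ideal.mem_span_singleton_self _, ?_⟩
      simp [genericLine]
      ring
  have hpow : idealOfVars (Fin 3) ℂ ^ ρ ≤
      Ideal.span ((fun a => X 0 ^ a * X 1 ^ (ρ - a)) '' (Finset.range (ρ + 1) : Set ℕ)) ⊔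
        Ideal.span {genericLine t} := by
    clear hv
    induction ρ with
    | zero => simp
    | succ ρ ih =>
      rw [pow_succ]
      refine (mul_le_mul_sup ih hM).trans (sup_le_sup_right ?_ _)
      rw [Ideal.span_mul_span', Ideal.span_le]
      rintro _ ⟨_, ⟨a, ha, rfl⟩, z, hz, rfl⟩
      have ha' : a ≤ ρ := by simpa [Nat.lt_succ_iff] using ha
      rcases hz with rfl | rfl
      · refine Ideal.subset_span ⟨a + 1, by simpa using ha', ?_⟩
        simp only [Nat.add_sub_add_right]
        ring
      · refine Ideal.subset_span ⟨a, by simpa using by omega, ?_⟩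
        simp only [Nat.succ_sub ha', pow_succ]
        ring
  obtain ⟨p, hp, q, hq, rfl⟩ := Submodule.mem_sup.1 (hpow hv)
  rw [Ideal.span, Submodule.mem_span_image_finset_iff_exists_fun'] at hp
  obtain ⟨b, rfl⟩ := hp
  refine ⟨b, ?_⟩
  simpa [Ideal.mem_span_singleton] using hq

end GenericLine

section ProductStep

/-- Summation by parts for the Koszul relations between consecutive monomials. -/
lemma sum_range_succ_koszul {R : Type*} [CommRing R] (x y : R) (d g : ℕ → R) {ρ : ℕ}
    (h0 : d 0 = 0) (hρ : d (ρ + 1) = 0) :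
    ∑ a ∈ Finset.range (ρ + 1), (y * d a - x * d (a + 1)) * g a =
      ∑ a ∈ Finset.range ρ, d (a + 1) * (y * g (a + 1) - x * g a) := by
  simp only [sub_mul, mul_sub, Finset.sum_sub_distrib]
  rw [Finset.sum_range_succ', Finset.sum_range_succ (fun a => x * d (a + 1) * g a), h0, hρ]
  simp only [mul_zero, zero_mul, add_zero]
  congr 1 <;> exact Finset.sum_congr rfl fun a _ => by ring

set_option maxHeartbeats 400000 in
/-- If `I` restricts to everything of order `ρ` on the line, then multiplication by `I ∩ M ^ ρ`
adds `ρ` to the order beyond which `K` is saturated with respect to the line. -/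
theorem saturated_mul_step (t : ℂ) {I : Ideal (MvPolynomial (Fin 3) ℂ)} {ρ : ℕ} (hρ : 0 < ρ)
    (hsat : ∀ u, genericLine t * u ∈ I → u ∈ I)
    (hI : GeneratedInDegree ρ (I ⊓ idealOfVars (Fin 3) ℂ ^ ρ))
    (hres : idealOfVars (Fin 3) ℂ ^ ρ ≤
      (I ⊓ idealOfVars (Fin 3) ℂ ^ ρ) ⊔ Ideal.span {genericLine t})
    {K : Ideal (MvPolynomial (Fin 3) ℂ)} {n : ℕ} (hK : GeneratedInDegree n K)
    (hKres : idealOfVars (Fin 3) ℂ ^ n ≤ K ⊔ Ideal.span {genericLine t})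
    (hKsat : ∀ u ∈ idealOfVars (Fin 3) ℂ ^ n, genericLine t * u ∈ K → u ∈ K)
    {f : MvPolynomial (Fin 3) ℂ} (hf : f ∈ idealOfVars (Fin 3) ℂ ^ (ρ + n))
    (hLf : genericLine t * f ∈ (I ⊓ idealOfVars (Fin 3) ℂ ^ ρ) * K) :
    f ∈ (I ⊓ idealOfVars (Fin 3) ℂ ^ ρ) * K := by
  set M := idealOfVars (Fin 3) ℂ with hMdef
  set L := genericLine t with hLdef
  set I' := I ⊓ M ^ ρ with hI'
  have hLM : L ∈ M := genericLine_mem_idealOfVars t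
  have hX : ∀ i : Fin 3, (X i : MvPolynomial (Fin 3) ℂ) ∈ M :=
    fun i => Ideal.subset_span ⟨i, rfl⟩
  have hL0 : L ≠ 0 := genericLine_ne_zero t
  have hdiv : ∀ {j : ℕ} {u : MvPolynomial (Fin 3) ℂ}, L * u ∈ M ^ (j + 1) → u ∈ M ^ j :=
    fun h => mem_pow_of_linear_mul_mem (isHomogeneous_genericLine t) hL0 h
  have hLf' : L * f ∈ M * (I' * K) := by
    refine (hI.mul hK).mem_mul_of_mem_pow_succ hLf ?_
    rw [pow_succ']
    exact Ideal.mul_mem_mul hLM hf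
  have hlift : ∀ a : ℕ, ∃ g ∈ I', a ≤ ρ → L ∣ X 0 ^ a * X 1 ^ (ρ - a) - g := by
    intro a
    by_cases ha : a ≤ ρ
    · have hmem : (X 0 ^ a * X 1 ^ (ρ - a) : MvPolynomial (Fin 3) ℂ) ∈ M ^ ρ := by
        have := Ideal.mul_mem_mul (Ideal.pow_mem_pow (hX 0) a) (Ideal.pow_mem_pow (hX 1) (ρ - a))
        rwa [← pow_add, Nat.add_sub_cancel' ha] at this
      obtain ⟨g, hg, q, hq, hgq⟩ := Submodule.mem_sup.1 (hres hmem)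
      refine ⟨g, hg, fun _ => ?_⟩
      rw [← hgq, add_sub_cancel_left]
      exact Ideal.mem_span_singleton.1 hq
    · exact ⟨0, zero_mem _, fun h => absurd h ha⟩
  choose g hgI hgL using hlift
  have hdecomp : ∀ w ∈ M * (I' * K), ∃ h : ℕ → MvPolynomial (Fin 3) ℂ, (∀ a, h a ∈ M * K) ∧
      ∃ q ∈ I' * K, w = ∑ a ∈ Finset.range (ρ + 1), h a * g a + L * q := by
    intro w hw
    rw [mul_left_comm] at hw
    refine Submodule.mul_induction_on hw ?_ ?_
    · intro v hv h hh
      obtain ⟨b, hb⟩ := exists_sum_monomials t ρ hv.2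
      have hvL : L ∣ v - ∑ a ∈ Finset.range (ρ + 1), b a * g a := by
        have h2 : L ∣ ∑ a ∈ Finset.range (ρ + 1), b a * (X 0 ^ a * X 1 ^ (ρ - a) - g a) :=
          Finset.dvd_sum fun a ha => (hgL a (by simpa [Nat.lt_succ_iff] using ha)).mul_left _
        have := dvd_add hb h2
        simp only [mul_sub, Finset.sum_sub_distrib] at this
        simpa using this
      obtain ⟨e, he⟩ := hvL
      have hmem : L * e ∈ I' := by
        rw [← he]
        exact sub_mem hv (sum_mem fun a _ => Ideal.mul_mem_left _ _ (hgI a))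
      have heI : e ∈ I := hsat e hmem.1
      have heM : e ∈ M ^ (ρ - 1) := hdiv (by rw [Nat.sub_add_cancel hρ]; exact hmem.2)
      refine ⟨fun a => b a * h, fun a => Ideal.mul_mem_left _ _ hh, e * h, ?_, ?_⟩
      · have hspan : M * Ideal.span {e} ≤ I' := by
          rw [hI', le_inf_iff]
          refine ⟨le_trans Ideal.mul_le_right ((Ideal.span_singleton_le_iff_mem _).2 heI), ?_⟩
          rw [← Nat.sub_add_cancel hρ, pow_succ']
          exact Ideal.mul_mono_right ((Ideal.span_singleton_le_iff_mem _).2 heM)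
        have h3 : e * h ∈ Ideal.span {e} * (M * K) :=
          Ideal.mul_mem_mul (Ideal.mem_span_singleton_self e) hh
        rw [← mul_assoc, mul_comm (Ideal.span {e})] at h3
        exact Ideal.mul_mono_left hspan h3
      · have : v = ∑ a ∈ Finset.range (ρ + 1), b a * g a + L * e := by rw [← he]; ring
        rw [this, add_mul, Finset.sum_mul, mul_assoc]
        congr 1
        exact Finset.sum_congr rfl fun a _ => by ring
    · rintro w w' ⟨h, hh, q, hq, rfl⟩ ⟨h', hh', q', hq', rfl⟩
      refine ⟨fun a => h a + h' a, fun a => add_mem (hh a) (hh' a), q + q', add_mem hq hq', ?_⟩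
      simp only [add_mul, Finset.sum_add_distrib]
      ring
  obtain ⟨h, hh, q, hq, hLfq⟩ := hdecomp _ hLf'
  have hMK : M * K ≤ M ^ (n + 1) := by
    rw [pow_succ']
    exact Ideal.mul_mono_right hK.le_pow
  have hsyz : ∑ a ∈ Finset.range (ρ + 1), lineProj t (h a) * (X 0 ^ a * X 1 ^ (ρ - a)) = 0 := by
    have h1 : L ∣ ∑ a ∈ Finset.range (ρ + 1), h a * (X 0 ^ a * X 1 ^ (ρ - a)) := by
      have h2 : L ∣ ∑ a ∈ Finset.range (ρ + 1), h a * (X 0 ^ a * X 1 ^ (ρ - a) - g a) :=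
        Finset.dvd_sum fun a ha => (hgL a (by simpa [Nat.lt_succ_iff] using ha)).mul_left _
      have h3 : L ∣ ∑ a ∈ Finset.range (ρ + 1), h a * g a :=
        ⟨f - q, by rw [mul_sub, hLfq]; ring⟩
      have := dvd_add h2 h3
      simp only [mul_sub, Finset.sum_sub_distrib] at this
      simpa using this
    have := lineProj_eq_zero_of_dvd h1
    simpa [lineProj] using this
  obtain ⟨c, hcM, hc0, hcρ, hc⟩ := exists_linear_syzygy ρ n (fun a => lineProj t (h a))
    (fun a => lineProj_mem_pow t (hMK (hh a))) hsyz
  have hcK : ∀ a, ∃ d ∈ K, L ∣ c a - d ∧ (c a = 0 → d = 0) := by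
    intro a
    by_cases ha : c a = 0
    · exact ⟨0, zero_mem _, by simp [ha], fun _ => rfl⟩
    · obtain ⟨d, hd, e, he, hde⟩ := Submodule.mem_sup.1 (hKres (hcM a))
      refine ⟨d, hd, ?_, fun h => absurd h ha⟩
      rw [← hde, add_sub_cancel_left]
      exact Ideal.mem_span_singleton.1 he
  choose d hdK hdL hd0 using hcK
  have hw : ∀ a : ℕ, ∃ w ∈ K, a ≤ ρ → h a = X 1 * d a - X 0 * d (a + 1) + L * w := by
    intro a
    by_cases ha : a ≤ ρ
    · have hdvd : L ∣ h a - (X 1 * d a - X 0 * d (a + 1)) := by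
        have h1 := genericLine_dvd_sub_lineProj t (h a)
        rw [hc a ha] at h1
        have := dvd_add h1 (dvd_sub ((hdL a).mul_left (X 1)) ((hdL (a + 1)).mul_left (X 0)))
        convert this using 1
        ring
      obtain ⟨w, hw⟩ := hdvd
      have hLw : L * w ∈ M * K := by
        rw [← hw]
        exact sub_mem (hh a) (sub_mem (Ideal.mul_mem_mul (hX 1) (hdK a))
          (Ideal.mul_mem_mul (hX 0) (hdK (a + 1))))
      refine ⟨w, hKsat w (hdiv (hMK hLw)) (Ideal.mul_le_right hLw), fun _ => ?_⟩
      rw [← hw]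
      ring
    · exact ⟨0, zero_mem _, fun h => absurd h ha⟩
  choose w hwK hwh using hw
  have hv : ∀ a : ℕ, ∃ v ∈ I', a + 1 ≤ ρ → X 1 * g (a + 1) - X 0 * g a = L * v := by
    intro a
    by_cases ha : a + 1 ≤ ρ
    · have hdvd : L ∣ X 1 * g (a + 1) - X 0 * g a := by
        have := dvd_sub ((hgL a (by omega)).mul_left (X 0)) ((hgL (a + 1) ha).mul_left (X 1))
        convert this using 1
        obtain ⟨j, rfl⟩ := Nat.exists_eq_add_of_le ha
        rw [show a + 1 + j - a = j + 1 by omega, show a + 1 + j - (a + 1) = j by omega]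
        ring
      obtain ⟨v, hv⟩ := hdvd
      have hvM : L * v ∈ M ^ (ρ + 1) := by
        rw [← hv, pow_succ']
        exact sub_mem (Ideal.mul_mem_mul (hX 1) (hgI (a + 1)).2)
          (Ideal.mul_mem_mul (hX 0) (hgI a).2)
      have hvI : L * v ∈ I := by
        rw [← hv]
        exact sub_mem (Ideal.mul_mem_left _ _ (hgI (a + 1)).1) (Ideal.mul_mem_left _ _ (hgI a).1)
      exact ⟨v, ⟨hsat v hvI, hdiv hvM⟩, fun _ => hv⟩
    · exact ⟨0, zero_mem _, fun h => absurd h ha⟩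
  choose v hvI hvL using hv
  have hfinal : f = ∑ a ∈ Finset.range ρ, d (a + 1) * v a +
      ∑ a ∈ Finset.range (ρ + 1), w a * g a + q := by
    refine mul_left_cancel₀ hL0 ?_
    rw [hLfq, mul_add, mul_add, Finset.mul_sum, Finset.mul_sum]
    congr 1
    have h1 : ∀ a ∈ Finset.range ρ, L * (d (a + 1) * v a) =
        d (a + 1) * (X 1 * g (a + 1) - X 0 * g a) := by
      intro a ha
      rw [hvL a (by simpa using ha)]
      ring
    rw [Finset.sum_congr rfl h1, ← sum_range_succ_koszul (X 0) (X 1) d g (hd0 0 hc0) (hd0 _ hcρ), ← Finset.sum_add_distrib]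
    refine Finset.sum_congr rfl fun a ha => ?_
    rw [hwh a (by simpa [Nat.lt_succ_iff] using ha)]
    ring
  rw [hfinal]
  refine add_mem (add_mem (sum_mem fun a _ => ?_) (sum_mem fun a _ => ?_)) hq
  · rw [mul_comm (d _)]
    exact Ideal.mul_mem_mul (hvI a) (hdK _)
  · rw [mul_comm (w _)]
    exact Ideal.mul_mem_mul (hgI a) (hwK a)

end ProductStep

section Powers

variable {t : ℂ} {I : Ideal (MvPolynomial (Fin 3) ℂ)} {ρ : ℕ}

theorem saturated_pow (hρ : 0 < ρ) (hsat : ∀ u, genericLine t * u ∈ I → u ∈ I)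
    (hI : GeneratedInDegree ρ (I ⊓ idealOfVars (Fin 3) ℂ ^ ρ))
    (hres : idealOfVars (Fin 3) ℂ ^ ρ ≤
      (I ⊓ idealOfVars (Fin 3) ℂ ^ ρ) ⊔ Ideal.span {genericLine t}) (r : ℕ) :
    GeneratedInDegree (r * ρ) ((I ⊓ idealOfVars (Fin 3) ℂ ^ ρ) ^ r) ∧
    idealOfVars (Fin 3) ℂ ^ (r * ρ) ≤
      (I ⊓ idealOfVars (Fin 3) ℂ ^ ρ) ^ r ⊔ Ideal.span {genericLine t} ∧
    ∀ u ∈ idealOfVars (Fin 3) ℂ ^ (r * ρ),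
      genericLine t * u ∈ (I ⊓ idealOfVars (Fin 3) ℂ ^ ρ) ^ r →
        u ∈ (I ⊓ idealOfVars (Fin 3) ℂ ^ ρ) ^ r := by
  induction r with
  | zero => simpa using generatedInDegree_top
  | succ r ih =>
    obtain ⟨h1, h2, h3⟩ := ih
    rw [show (r + 1) * ρ = ρ + r * ρ by ring, pow_succ' (I ⊓ _), pow_add _ ρ (r * ρ)]
    refine ⟨hI.mul h1, mul_le_mul_sup hres h2, fun u hu hLu => ?_⟩
    rw [← pow_add] at hu
    exact saturated_mul_step t hρ hsat hI hres h1 h2 h3 hu hLu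

/-- If some power of the line moves `f` into `I ^ r`, and `f` has order at least `(ρ + 1) r`, then
`f` already lies in `M ^ r * I ^ r`. -/
theorem mem_pow_mul_pow_of_genericLine_pow_mul_mem (hρ : 0 < ρ)
    (hsat : ∀ u, genericLine t * u ∈ I → u ∈ I)
    (hI : GeneratedInDegree ρ (I ⊓ idealOfVars (Fin 3) ℂ ^ ρ))
    (hres : idealOfVars (Fin 3) ℂ ^ ρ ≤
      (I ⊓ idealOfVars (Fin 3) ℂ ^ ρ) ⊔ Ideal.span {genericLine t}) {r N : ℕ}
    {f : MvPolynomial (Fin 3) ℂ} (hf : f ∈ idealOfVars (Fin 3) ℂ ^ (r * (ρ + 1)))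
    (hN : genericLine t ^ N * f ∈ I ^ r) :
    f ∈ idealOfVars (Fin 3) ℂ ^ r * I ^ r := by
  obtain ⟨hgen, -, hs⟩ := saturated_pow hρ hsat hI hres r
  have hdescend : ∀ (n : ℕ) (u : MvPolynomial (Fin 3) ℂ), u ∈ idealOfVars (Fin 3) ℂ ^ (r * ρ) →
      genericLine t ^ n * u ∈ (I ⊓ idealOfVars (Fin 3) ℂ ^ ρ) ^ r →
        u ∈ (I ⊓ idealOfVars (Fin 3) ℂ ^ ρ) ^ r := by
    intro n
    induction n with
    | zero => intro u _ h; simpa using h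
    | succ n ih =>
      intro u hu h
      refine hs u hu (ih _ (Ideal.mul_mem_left _ _ hu) ?_)
      rwa [← mul_assoc, ← pow_succ]
  have hL : Ideal.span {genericLine t ^ ρ} * I ≤ I ⊓ idealOfVars (Fin 3) ℂ ^ ρ :=
    le_inf Ideal.mul_le_right (le_trans Ideal.mul_le_left
      ((Ideal.span_singleton_le_iff_mem _).2
        (Ideal.pow_mem_pow (genericLine_mem_idealOfVars t) ρ)))
  have hmem : genericLine t ^ (ρ * r + N) * f ∈ (I ⊓ idealOfVars (Fin 3) ℂ ^ ρ) ^ r := by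
    refine Ideal.pow_right_mono hL r ?_
    rw [mul_pow, Ideal.span_singleton_pow, pow_add, mul_assoc, pow_mul]
    exact Ideal.mul_mem_mul (Ideal.mem_span_singleton_self _) hN
  have hfK := hdescend _ f
    (Ideal.pow_le_pow_right (Nat.mul_le_mul_left r (Nat.le_succ ρ)) hf) hmem
  have := hgen.mem_pow_mul_of_mem_pow_add hfK (j := r)
    (by rwa [show r + r * ρ = r * (ρ + 1) by ring])
  exact Ideal.mul_mono_right (Ideal.pow_right_mono inf_le_left r) this

end Powers

section Hilbert

lemma homogeneousComponent_succ_mul {σ k : Type*} [Field k] {L : MvPolynomial σ k}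
    (hL : L.IsHomogeneous 1) (d : ℕ) (u : MvPolynomial σ k) :
    homogeneousComponent (d + 1) (L * u) = L * homogeneousComponent d u := by
  classical
  have h : ∀ i, homogeneousComponent (d + 1) (L * homogeneousComponent i u) =
      if i = d then L * homogeneousComponent d u else 0 := by
    intro i
    have hi : L * homogeneousComponent i u ∈ homogeneousSubmodule σ k (1 + i) :=
      hL.mul (homogeneousComponent_isHomogeneous i u)
    rw [homogeneousComponent_of_mem hi]
    by_cases hid : i = d
    · subst hid
      simp [add_comm]
    · rw [if_neg hid, if_neg (by omega)]
  conv_lhs => rw [← sum_homogeneousComponent u, Finset.mul_sum, map_sum]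
  simp only [h, Finset.sum_ite_eq', Finset.mem_range]
  split_ifs with hd
  · rfl
  · rw [homogeneousComponent_eq_zero _ _ (by omega), mul_zero]

variable {L : MvPolynomial (Fin 3) ℂ} {I : Ideal (MvPolynomial (Fin 3) ℂ)}

/-- Constancy of the Hilbert function of `R/I` between `d` and `d + 1`, in terms of a linear form
which is a nonzerodivisor modulo `I`. -/
theorem quotientHilbert_eq_succ_iff (hL : L.IsHomogeneous 1) (hL0 : L ≠ 0)
    (hsat : ∀ u, L * u ∈ I → u ∈ I) (d : ℕ) :
    quotientHilbert I d = quotientHilbert I (d + 1) ↔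
      ∀ p : MvPolynomial (Fin 3) ℂ, p.IsHomogeneous (d + 1) →
        ∃ v ∈ I, ∃ u : MvPolynomial (Fin 3) ℂ, v.IsHomogeneous (d + 1) ∧ u.IsHomogeneous d ∧
          p = v + L * u := by
  set A := homogeneousSubmodule (Fin 3) ℂ d with hA
  set B := homogeneousSubmodule (Fin 3) ℂ (d + 1) with hB
  set J : Submodule ℂ (MvPolynomial (Fin 3) ℂ) := Submodule.restrictScalars ℂ I with hJ
  have : FiniteDimensional ℂ A := Module.Finite.iff_fg.2 (homogeneousSubmodule_fg _ _ d)
  have : FiniteDimensional ℂ B := Module.Finite.iff_fg.2 (homogeneousSubmodule_fg _ _ (d + 1))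
  let φ : MvPolynomial (Fin 3) ℂ →ₗ[ℂ] MvPolynomial (Fin 3) ℂ := LinearMap.mulLeft ℂ L
  have hφ : Function.Injective φ := fun a b hab => mul_left_cancel₀ hL0 hab
  have hmap : ∀ S : Submodule ℂ (MvPolynomial (Fin 3) ℂ),
      Module.finrank ℂ (S.map φ) = Module.finrank ℂ S :=
    fun S => (LinearEquiv.finrank_eq (Submodule.equivMapOfInjective φ hφ S)).symm
  have hAB : A.map φ ≤ B := by
    rintro _ ⟨a, ha, rfl⟩
    have : (L * a).IsHomogeneous (1 + d) := hL.mul ha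
    rwa [add_comm] at this
  have hinf : A.map φ ⊓ (B ⊓ J) = (A ⊓ J).map φ := by
    ext x
    constructor
    · rintro ⟨⟨a, ha, rfl⟩, -, hx⟩
      exact ⟨a, ⟨ha, hsat a hx⟩, rfl⟩
    · rintro ⟨a, ⟨ha, ha'⟩, rfl⟩
      exact ⟨⟨a, ha, rfl⟩, hAB ⟨a, ha, rfl⟩, Ideal.mul_mem_left I _ ha'⟩
  have hsum := Submodule.finrank_sup_add_finrank_inf_eq (A.map φ) (B ⊓ J)
  rw [hinf, hmap, hmap] at hsum
  have hle : A.map φ ⊔ (B ⊓ J) ≤ B := sup_le hAB inf_le_left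
  have h1 : Module.finrank ℂ (A ⊓ J : Submodule ℂ _) ≤ Module.finrank ℂ A :=
    Submodule.finrank_mono inf_le_left
  have h2 : Module.finrank ℂ (B ⊓ J : Submodule ℂ _) ≤ Module.finrank ℂ B :=
    Submodule.finrank_mono inf_le_left
  have hrank : quotientHilbert I d = quotientHilbert I (d + 1) ↔
      B ≤ A.map φ ⊔ (B ⊓ J) := by
    have : quotientHilbert I d = quotientHilbert I (d + 1) ↔
        Module.finrank ℂ (A.map φ ⊔ (B ⊓ J) : Submodule ℂ _) = Module.finrank ℂ B := by
      unfold quotientHilbert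
      rw [← hA, ← hB, ← hJ]
      omega
    rw [this]
    constructor
    · intro h
      exact (Submodule.eq_of_le_of_finrank_eq hle h).ge
    · intro h
      rw [le_antisymm hle h]
  rw [hrank]
  constructor
  · intro h p hp
    obtain ⟨_, ⟨u, hu, rfl⟩, v, ⟨hvB, hvI⟩, rfl⟩ := Submodule.mem_sup.1 (h hp)
    exact ⟨v, hvI, u, hvB, hu, add_comm _ _⟩
  · intro h p hp
    obtain ⟨v, hvI, u, hv, hu, rfl⟩ := h p hp
    exact add_mem (Submodule.mem_sup_right ⟨hv, hvI⟩) (Submodule.mem_sup_left ⟨u, hu, rfl⟩)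

attribute [local instance] MvPolynomial.gradedAlgebra

theorem quotientHilbert_eq_succ_of_pow_le (hL : L.IsHomogeneous 1) (hL0 : L ≠ 0)
    (hsat : ∀ u, L * u ∈ I → u ∈ I) (hI : I.IsHomogeneous (homogeneousSubmodule (Fin 3) ℂ))
    {N d : ℕ} (hN : idealOfVars (Fin 3) ℂ ^ N ≤ I ⊔ Ideal.span {L}) (hd : N ≤ d + 1) :
    quotientHilbert I d = quotientHilbert I (d + 1) := by
  refine (quotientHilbert_eq_succ_iff hL hL0 hsat d).2 fun p hp => ?_
  obtain ⟨v, hv, q, hq, hvq⟩ := Submodule.mem_sup.1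
    (hN (Ideal.pow_le_pow_right hd (mem_pow_of_isHomogeneous hp)))
  obtain ⟨u, rfl⟩ := Ideal.mem_span_singleton.1 hq
  refine ⟨homogeneousComponent (d + 1) v, homogeneousComponent_mem_of_mem hI hv _,
    homogeneousComponent d u, homogeneousComponent_isHomogeneous _ _,
    homogeneousComponent_isHomogeneous _ _, ?_⟩
  rw [← homogeneousComponent_succ_mul hL, ← map_add, hvq, homogeneousComponent_eq_self hp]

theorem pow_le_inf_sup_of_quotientHilbert_eq (hL : L.IsHomogeneous 1) (hL0 : L ≠ 0)
    (hsat : ∀ u, L * u ∈ I → u ∈ I) {d : ℕ}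
    (hd : quotientHilbert I d = quotientHilbert I (d + 1)) :
    idealOfVars (Fin 3) ℂ ^ (d + 1) ≤
      (I ⊓ idealOfVars (Fin 3) ℂ ^ (d + 1)) ⊔ Ideal.span {L} := by
  obtain ⟨G, hG, hspan⟩ := generatedInDegree_pow_idealOfVars (σ := Fin 3) (k := ℂ) (d + 1)
  conv_lhs => rw [hspan]
  refine Ideal.span_le.2 fun p hp => ?_
  obtain ⟨v, hv, u, hv', -, rfl⟩ := (quotientHilbert_eq_succ_iff hL hL0 hsat d).1 hd p (hG p hp)
  exact add_mem (Ideal.mem_sup_left ⟨hv, mem_pow_of_isHomogeneous hv'⟩)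
    (Ideal.mem_sup_right (Ideal.mul_mem_right _ _ (Ideal.mem_span_singleton_self L)))

theorem generatedInDegree_inf_pow (hL : L.IsHomogeneous 1) (hL0 : L ≠ 0)
    (hsat : ∀ u, L * u ∈ I → u ∈ I) (hI : I.IsHomogeneous (homogeneousSubmodule (Fin 3) ℂ))
    {d : ℕ} (hd : quotientHilbert I d = quotientHilbert I (d + 1)) :
    GeneratedInDegree (d + 1) (I ⊓ idealOfVars (Fin 3) ℂ ^ (d + 1)) := by
  set V : Set (MvPolynomial (Fin 3) ℂ) := {v | v ∈ I ∧ v.IsHomogeneous (d + 1)} with hV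
  have hVI : Ideal.span V ≤ I := Ideal.span_le.2 fun v hv => hv.1
  have hVhom : (Ideal.span V).IsHomogeneous (homogeneousSubmodule (Fin 3) ℂ) :=
    Ideal.homogeneous_span _ _ fun v hv => ⟨d + 1, hv.2⟩
  have hMV : idealOfVars (Fin 3) ℂ ^ (d + 1) ≤ Ideal.span V ⊔ Ideal.span {L} := by
    obtain ⟨G, hG, hspan⟩ := generatedInDegree_pow_idealOfVars (σ := Fin 3) (k := ℂ) (d + 1)
    rw [hspan]
    refine Ideal.span_le.2 fun p hp => ?_
    obtain ⟨v, hv, u, hv', -, rfl⟩ := (quotientHilbert_eq_succ_iff hL hL0 hsat d).1 hd p (hG p hp)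
    exact add_mem (Ideal.mem_sup_left (Ideal.subset_span ⟨hv, hv'⟩))
      (Ideal.mem_sup_right (Ideal.mul_mem_right _ _ (Ideal.mem_span_singleton_self L)))
  have hforms : ∀ j : ℕ, ∀ p ∈ I, p.IsHomogeneous (d + 1 + j) → p ∈ Ideal.span V := by
    intro j
    induction j with
    | zero => exact fun p hp hp' => Ideal.subset_span ⟨hp, hp'⟩
    | succ j ih =>
      intro p hp hp'
      obtain ⟨v, hv, q, hq, hvq⟩ := Submodule.mem_sup.1
        (hMV (Ideal.pow_le_pow_right (by omega) (mem_pow_of_isHomogeneous hp')))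
      obtain ⟨u, rfl⟩ := Ideal.mem_span_singleton.1 hq
      have hpe : p = homogeneousComponent (d + 1 + j + 1) v +
          L * homogeneousComponent (d + 1 + j) u := by
        rw [← homogeneousComponent_succ_mul hL, ← map_add, hvq]
        exact (homogeneousComponent_eq_self hp').symm
      have hv1 := homogeneousComponent_mem_of_mem hVhom hv (d + 1 + j + 1)
      rw [hpe]
      refine add_mem hv1 (Ideal.mul_mem_left _ _ (ih _ (hsat _ ?_)
        (homogeneousComponent_isHomogeneous _ _)))
      have : L * homogeneousComponent (d + 1 + j) u =
          p - homogeneousComponent (d + 1 + j + 1) v := by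
        rw [hpe]
        ring
      rw [this]
      exact sub_mem hp (hVI hv1)
  refine ⟨V, fun v hv => hv.2, le_antisymm ?_ ?_⟩
  · rintro p ⟨hpI, hpM⟩
    rw [mem_iff_homogeneousComponent_mem hVhom]
    intro n
    by_cases hn : d + 1 ≤ n
    · obtain ⟨j, rfl⟩ := Nat.exists_eq_add_of_le hn
      exact hforms j _ (homogeneousComponent_mem_of_mem hI hpI _)
        (homogeneousComponent_isHomogeneous _ _)
    · have : homogeneousComponent n p = 0 := by
        classical
        ext x
        rw [coeff_homogeneousComponent, coeff_zero]
        split_ifs with hx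
        · exact (mem_pow_idealOfVars_iff' _ _).1 hpM x (by omega)
        · rfl
      rw [this]
      exact zero_mem _
  · exact Ideal.span_le.2 fun v hv => ⟨hv.1, mem_pow_of_isHomogeneous hv.2⟩

end Hilbert

section Points

lemma mem_pow_idealOfVars_of_mul_mem {σ R : Type*} [CommRing R] [IsDomain R] {c : R} (hc : c ≠ 0)
    {z : MvPolynomial σ R} (hz : z ∈ idealOfVars σ R) {a : ℕ} {g : MvPolynomial σ R}
    (hg : (C c + z) * g ∈ idealOfVars σ R ^ a) : g ∈ idealOfVars σ R ^ a := by
  have h : ∀ j ≤ a, g ∈ idealOfVars σ R ^ j := by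
    intro j
    induction j with
    | zero => simp
    | succ j ih =>
      intro hj
      have hzg : z * g ∈ idealOfVars σ R ^ (j + 1) := by
        rw [pow_succ']
        exact Ideal.mul_mem_mul hz (ih (by omega))
      have hcg : C c * g ∈ idealOfVars σ R ^ (j + 1) := by
        have := sub_mem (Ideal.pow_le_pow_right hj hg) hzg
        rwa [add_mul, add_sub_cancel_right] at this
      rw [mem_pow_idealOfVars_iff'] at hcg ⊢
      intro x hx
      have := hcg x hx
      rw [coeff_C_mul] at this
      exact (mul_eq_zero.1 this).resolve_left hc
  exact h a le_rfl

variable {p : Fin 3 → ℂ} {L : MvPolynomial (Fin 3) ℂ}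

lemma pointIdeal_le_idealOfVars (p : Fin 3 → ℂ) : pointIdeal p ≤ idealOfVars (Fin 3) ℂ :=
  Ideal.span_le.2 fun f hf => by
    simpa using mem_pow_of_isHomogeneous (show f.IsHomogeneous 1 from hf.1)

/-- The linear form obtained from `X j` by subtracting its value at `p`, measured in terms of a
linear form `L` which does not vanish at `p`. -/
lemma X_sub_mem_pointIdeal (hL : L.IsHomogeneous 1) (hp : eval p L ≠ 0) (j : Fin 3) :
    X j - C (p j) * (C (eval p L)⁻¹ * L) ∈ pointIdeal p := by
  refine Ideal.subset_span ⟨?_, ?_⟩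
  · have h : (C (p j) * (C (eval p L)⁻¹ * L)).IsHomogeneous (0 + (0 + 1)) :=
      (isHomogeneous_C _ _).mul ((isHomogeneous_C _ _).mul hL)
    exact (isHomogeneous_X ℂ j).sub (by simpa using h)
  · simp [hp]

lemma idealOfVars_le_pointIdeal_sup (hL : L.IsHomogeneous 1) (hp : eval p L ≠ 0) :
    idealOfVars (Fin 3) ℂ ≤ pointIdeal p ⊔ Ideal.span {L} := by
  refine Ideal.span_le.2 ?_
  rintro _ ⟨j, rfl⟩
  refine Submodule.mem_sup.2 ⟨_, X_sub_mem_pointIdeal hL hp j, C (p j) * (C (eval p L)⁻¹ * L),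
    Ideal.mul_mem_left _ _ (Ideal.mul_mem_left _ _ (Ideal.mem_span_singleton_self L)), ?_⟩
  ring

/-- Translation along the line through `p`, with a new parameter. -/
noncomputable def translate (p : Fin 3 → ℂ) :
    MvPolynomial (Fin 3) ℂ →ₐ[ℂ] MvPolynomial (Fin 3) (Polynomial ℂ) :=
  aeval fun j => X j + C (Polynomial.C (p j) * Polynomial.X)

lemma translate_sub_mem (p : Fin 3 → ℂ) {f : MvPolynomial (Fin 3) ℂ} (hf : f.IsHomogeneous 1) :
    translate p f - C (Polynomial.C (eval p f) * Polynomial.X) ∈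
      idealOfVars (Fin 3) (Polynomial ℂ) := by
  have hf' : f ∈ Submodule.span ℂ (Set.range (X : Fin 3 → MvPolynomial (Fin 3) ℂ)) := by
    rw [← homogeneousSubmodule_one_eq_span_X]
    exact hf
  clear hf
  induction hf' using Submodule.span_induction with
  | mem f h =>
    obtain ⟨j, rfl⟩ := h
    simp only [translate, aeval_X, eval_X, add_sub_cancel_right]
    exact Ideal.subset_span ⟨j, rfl⟩
  | zero => simp
  | add f g _ _ h1 h2 =>
    convert add_mem h1 h2 using 1
    simp only [map_add, add_mul]
    ring
  | smul c f _ h =>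
    convert Ideal.mul_mem_left _ (C (Polynomial.C c)) h using 1
    simp only [smul_eq_C_mul, map_mul, eval_C, translate, algHom_C,
      IsScalarTower.algebraMap_apply ℂ (Polynomial ℂ) (MvPolynomial (Fin 3) (Polynomial ℂ)),
      algebraMap_eq, Polynomial.algebraMap_eq]
    ring

lemma translate_mem_pow (p : Fin 3 → ℂ) {a : ℕ} {f : MvPolynomial (Fin 3) ℂ}
    (hf : f ∈ pointIdeal p ^ a) : translate p f ∈ idealOfVars (Fin 3) (Polynomial ℂ) ^ a := by
  have h : pointIdeal p ≤ (idealOfVars (Fin 3) (Polynomial ℂ)).comap (translate p) := by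
    refine Ideal.span_le.2 fun f hf => ?_
    have := translate_sub_mem p hf.1
    rw [hf.2] at this
    simpa using this
  exact (Ideal.pow_right_mono h a).trans (Ideal.le_comap_pow _ a) hf

theorem mem_pointIdeal_pow_of_mul_mem (hL : L.IsHomogeneous 1) (hp : eval p L ≠ 0) {a : ℕ}
    {u : MvPolynomial (Fin 3) ℂ} (hu : L * u ∈ pointIdeal p ^ a) : u ∈ pointIdeal p ^ a := by
  have htu : translate p u ∈ idealOfVars (Fin 3) (Polynomial ℂ) ^ a := by
    refine mem_pow_idealOfVars_of_mul_mem (c := Polynomial.C (eval p L) * Polynomial.X)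
      (by simpa using hp) (translate_sub_mem p hL) ?_
    rw [add_sub_cancel, ← map_mul]
    exact translate_mem_pow p hu
  let ψ : MvPolynomial (Fin 3) (Polynomial ℂ) →+* MvPolynomial (Fin 3) ℂ :=
    eval₂Hom (Polynomial.aeval (C (eval p L)⁻¹ * L) : Polynomial ℂ →ₐ[ℂ] _).toRingHom
      fun j => X j - C (p j) * (C (eval p L)⁻¹ * L)
  have hψ : ψ.comp (translate p).toRingHom = RingHom.id _ := by
    refine ringHom_ext (fun c => ?_) fun j => ?_
    · simp [ψ, translate, IsScalarTower.algebraMap_apply ℂ (Polynomial ℂ)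
        (MvPolynomial (Fin 3) (Polynomial ℂ)), algebraMap_eq]
    · simp [ψ, translate, algebraMap_eq]
  have hle : idealOfVars (Fin 3) (Polynomial ℂ) ≤ (pointIdeal p).comap ψ := by
    refine Ideal.span_le.2 ?_
    rintro _ ⟨j, rfl⟩
    simpa [ψ] using X_sub_mem_pointIdeal hL hp j
  have := (Ideal.pow_right_mono hle a).trans (Ideal.le_comap_pow _ a) htu
  have he : ψ (translate p u) = u := RingHom.congr_fun hψ u
  rwa [Ideal.mem_comap, he] at this

end Points

section Intersections

/-- If `L` lies in the radical of every `Q i + Q j`, then a power of `L` multiplies the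
intersection of the `Q i` into their product. -/
lemma exists_pow_mul_mem_prod {R ι : Type*} [CommRing R] {L : R} {Q : ι → Ideal R}
    (hQ : ∀ i j, i ≠ j → ∀ 𝔭 : Ideal R, 𝔭.IsPrime → Q i ≤ 𝔭 → Q j ≤ 𝔭 → L ∈ 𝔭) (s : Finset ι) :
    ∃ N : ℕ, ∀ f, (∀ i ∈ s, f ∈ Q i) → L ^ N * f ∈ ∏ i ∈ s, Q i := by
  classical
  induction s using Finset.induction_on with
  | empty => exact ⟨0, by simp⟩
  | insert a s ha ih =>
    obtain ⟨N, hN⟩ := ih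
    have hrad : L ∈ (Q a ⊔ ∏ i ∈ s, Q i).radical := by
      rw [Ideal.radical_eq_sInf, Submodule.mem_sInf]
      rintro 𝔭 ⟨hle, hp⟩
      obtain ⟨i, hi, hQi⟩ := (hp.prod_le).1 (le_trans le_sup_right hle)
      exact hQ a i (fun h => ha (h ▸ hi)) 𝔭 hp (le_trans le_sup_left hle) hQi
    obtain ⟨n, hn⟩ := hrad
    obtain ⟨x, hx, y, hy, hxy⟩ := Submodule.mem_sup.1 hn
    refine ⟨n + N, fun f hf => ?_⟩
    have hfs := hN f fun i hi => hf i (Finset.mem_insert_of_mem hi)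
    have hfa : L ^ N * f ∈ Q a := Ideal.mul_mem_left _ _ (hf a (Finset.mem_insert_self a s))
    rw [Finset.prod_insert ha, pow_add, mul_assoc, ← hxy, add_mul]
    exact add_mem (Ideal.mul_mem_mul hx hfs) (Ideal.mul_mem_mul_rev hfa hy)

lemma pow_le_pow_sup {R : Type*} [CommRing R] {A B N : Ideal R} (h : A ≤ B ⊔ N) (n : ℕ) :
    A ^ n ≤ B ^ n ⊔ N := by
  induction n with
  | zero => simp
  | succ n ih =>
    rw [pow_succ, pow_succ]
    exact mul_le_mul_sup ih h

lemma prod_le_prod_sup {R ι : Type*} [CommRing R] {A B : ι → Ideal R} {N : Ideal R}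
    (h : ∀ i, A i ≤ B i ⊔ N) (s : Finset ι) : ∏ i ∈ s, A i ≤ (∏ i ∈ s, B i) ⊔ N := by
  classical
  induction s using Finset.induction_on with
  | empty => simp
  | insert a s ha ih =>
    rw [Finset.prod_insert ha, Finset.prod_insert ha]
    exact mul_le_mul_sup (h a) ih

lemma idealOfVars_le_pointIdeal_sup_pointIdeal {p q : Fin 3 → ℂ} (hp : p ≠ 0)
    (hpq : ∀ c : ℂ, c • p ≠ q) : idealOfVars (Fin 3) ℂ ≤ pointIdeal p ⊔ pointIdeal q := by
  obtain ⟨a, b, hab⟩ : ∃ a b, p a * q b - p b * q a ≠ 0 := by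
    by_contra! h
    obtain ⟨a, ha⟩ := Function.ne_iff.1 hp
    refine hpq (q a / p a) (funext fun b => ?_)
    have ha' : p a ≠ 0 := ha
    have := h a b
    simp only [Pi.smul_apply, smul_eq_mul]
    field_simp
    linear_combination -this
  have hN : (C (p a) * X b - C (p b) * X a : MvPolynomial (Fin 3) ℂ).IsHomogeneous 1 :=
    (isHomogeneous_C_mul_X _ _).sub (isHomogeneous_C_mul_X _ _)
  have h := idealOfVars_le_pointIdeal_sup (p := q) hN (by simpa using hab)
  rw [sup_comm] at h
  refine h.trans (sup_le_sup_right ?_ _)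
  rw [Ideal.span_singleton_le_iff_mem]
  refine Ideal.subset_span ⟨hN, ?_⟩
  simp
  ring

lemma exists_genericLine_eval_ne_zero {ι : Type*} [Finite ι] {P : ι → Fin 3 → ℂ}
    (hP : ∀ i, P i ≠ 0) : ∃ t : ℂ, ∀ i, eval (P i) (genericLine t) ≠ 0 := by
  have := Fintype.ofFinite ι
  let F : ι → Polynomial ℂ := fun i => Polynomial.C (P i 2) +
    Polynomial.C (P i 0) * Polynomial.X + Polynomial.C (P i 1) * Polynomial.X ^ 2
  have hF : ∀ i, F i ≠ 0 := by
    intro i h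
    refine hP i (funext fun j => ?_)
    have h0 := congrArg (Polynomial.coeff · 0) h
    have h1 := congrArg (Polynomial.coeff · 1) h
    have h2 := congrArg (Polynomial.coeff · 2) h
    simp [F, Polynomial.coeff_X, Polynomial.coeff_C, Polynomial.coeff_X_pow] at h0 h1 h2
    fin_cases j <;> simp [h0, h1, h2]
  obtain ⟨t, ht⟩ := Polynomial.exists_eval_ne_zero_of_natDegree_lt_card (∏ i, F i)
    (Finset.prod_ne_zero_iff.2 fun i _ => hF i) (by
      exact lt_of_lt_of_le (Cardinal.natCast_lt_aleph0) (Cardinal.aleph0_le_mk ℂ))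
  refine ⟨t, fun i hi => ht ?_⟩
  rw [Polynomial.eval_prod]
  refine Finset.prod_eq_zero (Finset.mem_univ i) ?_
  simp [genericLine] at hi
  simp [F]
  linear_combination hi

attribute [local instance] MvPolynomial.gradedAlgebra

lemma isHomogeneous_pointIdeal_pow (p : Fin 3 → ℂ) (a : ℕ) :
    (pointIdeal p ^ a).IsHomogeneous (homogeneousSubmodule (Fin 3) ℂ) := by
  induction a with
  | zero =>
    rw [pow_zero, Ideal.one_eq_top]
    exact Ideal.IsHomogeneous.top _
  | succ a ih =>
    rw [pow_succ]
    exact ih.mul (Ideal.homogeneous_span _ _ fun f hf => ⟨1, hf.1⟩)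

lemma isHomogeneous_iInf_pointIdeal_pow {ι : Type*} (P : ι → Fin 3 → ℂ) (a : ι → ℕ) :
    (⨅ i, pointIdeal (P i) ^ a i).IsHomogeneous (homogeneousSubmodule (Fin 3) ℂ) :=
  Ideal.IsHomogeneous.iInf fun i => isHomogeneous_pointIdeal_pow (P i) (a i)

/-- A homogeneous ideal all of whose nonzero elements have degree at least `n` is contained in the
`n`-th power of the irrelevant ideal. -/
lemma le_pow_idealOfVars_of_le_initialDegree {J : Ideal (MvPolynomial (Fin 3) ℂ)}
    (hJ : J.IsHomogeneous (homogeneousSubmodule (Fin 3) ℂ)) {n : ℕ} (hn : n ≤ initialDegree J) :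
    J ≤ idealOfVars (Fin 3) ℂ ^ n := by
  intro f hf
  rw [mem_pow_idealOfVars_iff']
  intro x hx
  by_contra hne
  have hc : homogeneousComponent x.degree f ≠ 0 := by
    intro h
    have := congrArg (coeff x) h
    rw [coeff_homogeneousComponent, if_pos rfl, coeff_zero] at this
    exact hne this
  have hle : initialDegree J ≤ x.degree := Nat.sInf_le
    ⟨_, homogeneousComponent_mem_of_mem hJ hf x.degree, hc,
      (homogeneousComponent_isHomogeneous _ _).totalDegree hc⟩
  omega

end Intersections

end FatPoints

/-- Corollary 4.3 (cor:hahu): let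
`I = 𝔪_{P_1}^{m_1} ∩ … ∩ 𝔪_{P_s}^{m_s}` be a fat points ideal in `ℙ²` and `M`
the irrelevant ideal.  If `α(I^{(2r)}) ≥ r·(reg(I) + 1)`, where
`I^{(2r)} = 𝔪_{P_1}^{2r·m_1} ∩ … ∩ 𝔪_{P_s}^{2r·m_s}` is the symbolic power,
then `I^{(2r)} ⊆ M^r · I^r`. -/
theorem fatPoints_symbolic_containment (s : ℕ) (hs : 0 < s)
    (P : Fin s → (Fin 3 → ℂ)) (hP : ∀ i, P i ≠ 0)
    (hdistinct : ∀ i j : Fin s, i ≠ j → ∀ c : ℂ, c • P i ≠ P j)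
    (m : Fin s → ℕ) (hm : ∀ i, 0 < m i) (r : ℕ) (hr : 0 < r)
    (halpha : r * (regCM (⨅ i, pointIdeal (P i) ^ m i) + 1) ≤
      initialDegree (⨅ i, pointIdeal (P i) ^ (2 * r * m i))) :
    (⨅ i, pointIdeal (P i) ^ (2 * r * m i)) ≤
      (Ideal.span (Set.range (MvPolynomial.X (R := ℂ) (σ := Fin 3)))) ^ r *
        (⨅ i, pointIdeal (P i) ^ m i) ^ r := by
  obtain ⟨t, ht⟩ := FatPoints.exists_genericLine_eval_ne_zero hP
  have hL := FatPoints.isHomogeneous_genericLine t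
  have hL0 := FatPoints.genericLine_ne_zero t
  set I : Ideal (MvPolynomial (Fin 3) ℂ) := ⨅ i, pointIdeal (P i) ^ m i with hI
  have hsat : ∀ u, FatPoints.genericLine t * u ∈ I → u ∈ I := fun u hu => by
    rw [hI, Submodule.mem_iInf] at hu ⊢
    exact fun i => FatPoints.mem_pointIdeal_pow_of_mul_mem hL (ht i) (hu i)
  have hprod : ∏ i, pointIdeal (P i) ^ m i ≤ I := by
    rw [hI, ← Finset.inf_univ_eq_iInf]
    exact Ideal.prod_le_inf
  have hpow : MvPolynomial.idealOfVars (Fin 3) ℂ ^ ∑ i, m i ≤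
      I ⊔ Ideal.span {FatPoints.genericLine t} := by
    rw [← Finset.prod_pow_eq_pow_sum]
    exact (FatPoints.prod_le_prod_sup (fun i => FatPoints.pow_le_pow_sup
      (FatPoints.idealOfVars_le_pointIdeal_sup hL (ht i)) (m i)) _).trans
        (sup_le_sup_right hprod _)
  have hIhom := FatPoints.isHomogeneous_iInf_pointIdeal_pow P m
  have hJhom := FatPoints.isHomogeneous_iInf_pointIdeal_pow P fun i => 2 * r * m i
  have hreg : ∀ d : ℕ, regCM I ≤ d + 1 → quotientHilbert I d = quotientHilbert I (d + 1) :=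
    Nat.sInf_mem (s := {t | ∀ d : ℕ, t ≤ d + 1 → quotientHilbert I d = quotientHilbert I (d + 1)})
      ⟨∑ i, m i, fun d hd =>
        FatPoints.quotientHilbert_eq_succ_of_pow_le hL hL0 hsat hIhom hpow hd⟩
  obtain ⟨d, hd, hJ⟩ : ∃ d : ℕ, regCM I ≤ d + 1 ∧
      (⨅ i, pointIdeal (P i) ^ (2 * r * m i)) ≤
        MvPolynomial.idealOfVars (Fin 3) ℂ ^ (r * (d + 1 + 1)) := by
    rcases Nat.eq_zero_or_pos (regCM I) with h0 | h0
    · refine ⟨0, by omega, (iInf_le _ ⟨0, hs⟩).trans ?_⟩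
      refine (Ideal.pow_right_mono (FatPoints.pointIdeal_le_idealOfVars _) _).trans
        (Ideal.pow_le_pow_right ?_)
      have := Nat.mul_le_mul_left (2 * r) (hm ⟨0, hs⟩)
      omega
    · refine ⟨regCM I - 1, by omega,
        FatPoints.le_pow_idealOfVars_of_le_initialDegree hJhom ?_⟩
      rwa [Nat.sub_add_cancel h0]
  obtain ⟨N, hN⟩ := FatPoints.exists_pow_mul_mem_prod (L := FatPoints.genericLine t)
    (Q := fun i => (pointIdeal (P i) ^ m i) ^ r) (fun i j hij 𝔭 hp hi hj =>
      (FatPoints.idealOfVars_le_pointIdeal_sup_pointIdeal (hP i) (hdistinct i j hij)).trans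
        (sup_le (hp.le_of_pow_le (hp.le_of_pow_le hi)) (hp.le_of_pow_le (hp.le_of_pow_le hj)))
        (FatPoints.genericLine_mem_idealOfVars t)) Finset.univ
  intro f hf
  refine FatPoints.mem_pow_mul_pow_of_genericLine_pow_mul_mem d.succ_pos hsat
    (FatPoints.generatedInDegree_inf_pow hL hL0 hsat hIhom (hreg d hd))
    (FatPoints.pow_le_inf_sup_of_quotientHilbert_eq hL hL0 hsat (hreg d hd)) (hJ hf)
    (N := N) (Ideal.pow_right_mono hprod r ?_)
  rw [← Finset.prod_pow]
  refine hN f fun i _ => ?_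
  rw [← pow_mul]
  exact Ideal.pow_le_pow_right (by nlinarith) ((Submodule.mem_iInf _).1 hf i)
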